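/- Let A be a skew left brace such that A = B + C is a factorization through left ideals B and C which are trivial as skew left braces. Then A^(2) = B*C + C*B = C*B + B*C, where A^(2) = A*A. -/

import Mathlib

/-- A skew left brace: `(A,+)` and `(A,∘)` are groups (sharing the same identity `0`)
such that `a ∘ (b + c) = a ∘ b - a + a ∘ c`.  Here `circ` is the operation `∘` and
`cinv a` is the inverse of `a` in `(A,∘)`. -/
class SkewBrace (A : Type*) extends AddGroup A where
  circ : A → A → A
  cinv : A → A
  circ_assoc : ∀ a b c : A, circ (circ a b) c = circ a (circ b c)
  zero_circ : ∀ a : A, circ 0 a = a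
  circ_zero : ∀ a : A, circ a 0 = a
  cinv_circ : ∀ a : A, circ (cinv a) a = 0
  circ_cinv : ∀ a : A, circ a (cinv a) = 0
  compat : ∀ a b c : A, circ a (b + c) = circ a b + -a + circ a c

open SkewBrace

/-- `lam a b = -a + a ∘ b`. -/
def lam {A : Type*} [SkewBrace A] (a b : A) : A := -a + circ a b

/-- The star operation `a * b = lam a b - b = -a + a ∘ b - b`. -/
def bstar {A : Type*} [SkewBrace A] (a b : A) : A := lam a b - b

/-- `X * Y`: the subgroup of `(A,+)` generated by `{x * y : x ∈ X, y ∈ Y}`. -/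
def starSpan {A : Type*} [SkewBrace A] (X Y : Set A) : AddSubgroup A :=
  AddSubgroup.closure {z | ∃ x ∈ X, ∃ y ∈ Y, z = bstar x y}

/-- The right series of `st`: `rseriesOf st 0 = A = A^(1)` and
`rseriesOf st n = A^(n+1)`, so that `A^(n+1) = A^(n) * A`. -/
def rseriesOf {G : Type*} [AddGroup G] (st : G → G → G) : ℕ → AddSubgroup G
  | 0 => ⊤
  | n + 1 => AddSubgroup.closure {z | ∃ u ∈ rseriesOf st n, ∃ a : G, z = st u a}

/-!
For every `X`, the identity `x * (g + a) = x * g + (g + x * a - g)` shows that the subgroup `X * A`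
is normal in `(A,+)`. If `B` is trivial, then `b * (c + b') = b * c` for `b, b' ∈ B`, and hence
`B * A = B * C`; symmetrically `C * A = C * B`. Since `C` is a left ideal, every element of `A` is
of the form `b ∘ c`, and `(b ∘ c) * x = b * (c * x) + c * x + b * x` lies in `B * A + C * A`.
-/

namespace SkewBrace

variable {A : Type*} [SkewBrace A]

theorem circ_eq_add_lam (a b : A) : circ a b = a + lam a b := by
  rw [lam, add_neg_cancel_left]

theorem lam_zero_left (a : A) : lam 0 a = a := by
  rw [lam, zero_circ, neg_zero, zero_add]

theorem lam_add (a b c : A) : lam a (b + c) = lam a b + lam a c := by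
  simp only [lam, compat, add_assoc]

theorem lam_circ (a b c : A) : lam (circ a b) c = lam a (lam b c) := by
  have h : circ (circ a b) c = circ a b + lam a (lam b c) := by
    rw [circ_assoc, circ_eq_add_lam b c, circ_eq_add_lam a, lam_add, ← add_assoc,
      ← circ_eq_add_lam]
  rw [lam, h, neg_add_cancel_left]

theorem add_eq_circ_lam_cinv (a b : A) : a + b = circ a (lam (cinv a) b) := by
  rw [circ_eq_add_lam, ← lam_circ, circ_cinv, lam_zero_left]

theorem lam_eq_bstar_add (a b : A) : lam a b = bstar a b + b :=
  (sub_add_cancel _ _).symm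

theorem bstar_add (a b c : A) : bstar a (b + c) = bstar a b + (b + bstar a c + -b) := by
  simp only [bstar, lam_add, sub_eq_add_neg, neg_add_rev, add_assoc, neg_add_cancel_left]

theorem bstar_circ (a b c : A) :
    bstar (circ a b) c = bstar a (bstar b c) + bstar b c + bstar a c := by
  rw [bstar, lam_circ, lam_eq_bstar_add b c, lam_add, lam_eq_bstar_add a (bstar b c),
    lam_eq_bstar_add a c, ← add_assoc, add_sub_cancel_right]

theorem bstar_eq_zero_iff {a b : A} : bstar a b = 0 ↔ a + b = circ a b := by
  rw [bstar, sub_eq_zero, circ_eq_add_lam, add_right_inj, eq_comm]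

theorem bstar_mem_starSpan {X Y : Set A} {x y : A} (hx : x ∈ X) (hy : y ∈ Y) :
    bstar x y ∈ starSpan X Y :=
  AddSubgroup.subset_closure ⟨x, hx, y, hy, rfl⟩

theorem starSpan_le {X Y : Set A} {H : AddSubgroup A} :
    starSpan X Y ≤ H ↔ ∀ x ∈ X, ∀ y ∈ Y, bstar x y ∈ H := by
  rw [starSpan, AddSubgroup.closure_le]
  constructor
  · exact fun h x hx y hy => h ⟨x, hx, y, hy, rfl⟩
  · rintro h _ ⟨x, hx, y, hy, rfl⟩
    exact h x hx y hy

theorem starSpan_mono {X X' Y Y' : Set A} (hX : X ⊆ X') (hY : Y ⊆ Y') :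
    starSpan X Y ≤ starSpan X' Y' :=
  starSpan_le.2 fun _ hx _ hy => bstar_mem_starSpan (hX hx) (hY hy)

instance normal_starSpan_univ (X : Set A) : (starSpan X Set.univ).Normal := by
  rw [← AddSubgroup.normalizer_eq_top_iff, eq_top_iff, starSpan,
    AddSubgroup.le_normalizer_closure_iff, ← starSpan]
  rintro g - _ ⟨x, hx, a, -, rfl⟩
  have hconj : g + bstar x a + -g = -bstar x g + bstar x (g + a) := by
    rw [bstar_add, neg_add_cancel_left]
  rw [hconj]
  exact add_mem (neg_mem (bstar_mem_starSpan hx trivial)) (bstar_mem_starSpan hx trivial)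

theorem starSpan_univ_right_eq_of_bstar_eq_zero {X Y Z : Set A}
    (hXZ : ∀ x ∈ X, ∀ z ∈ Z, bstar x z = 0) (hYZ : ∀ a : A, ∃ y ∈ Y, ∃ z ∈ Z, a = y + z) :
    starSpan X Set.univ = starSpan X Y := by
  refine le_antisymm (starSpan_le.2 fun x hx a _ => ?_)
    (starSpan_mono subset_rfl (Set.subset_univ Y))
  obtain ⟨y, hy, z, hz, rfl⟩ := hYZ a
  rw [bstar_add, hXZ x hx z hz, add_zero, add_neg_cancel, add_zero]
  exact bstar_mem_starSpan hx hy

theorem starSpan_univ_univ_eq_sup {X Y : Set A} (hXY : ∀ a : A, ∃ x ∈ X, ∃ y ∈ Y, a = circ x y) :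
    starSpan (Set.univ : Set A) Set.univ = starSpan X Set.univ ⊔ starSpan Y Set.univ := by
  refine le_antisymm (starSpan_le.2 fun a _ c _ => ?_)
    (sup_le (starSpan_mono (Set.subset_univ X) subset_rfl)
      (starSpan_mono (Set.subset_univ Y) subset_rfl))
  obtain ⟨x, hx, y, hy, rfl⟩ := hXY a
  have hX (c : A) : bstar x c ∈ starSpan X Set.univ ⊔ starSpan Y Set.univ :=
    AddSubgroup.mem_sup_left (bstar_mem_starSpan hx trivial)
  have hY : bstar y c ∈ starSpan X Set.univ ⊔ starSpan Y Set.univ :=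
    AddSubgroup.mem_sup_right (bstar_mem_starSpan hy trivial)
  rw [bstar_circ]
  exact add_mem (add_mem (hX _) hY) (hX c)

theorem exists_eq_circ_of_exists_eq_add {X Y : Set A} (hY : ∀ a : A, ∀ y ∈ Y, lam a y ∈ Y)
    (hXY : ∀ a : A, ∃ x ∈ X, ∃ y ∈ Y, a = x + y) (a : A) : ∃ x ∈ X, ∃ y ∈ Y, a = circ x y := by
  obtain ⟨x, hx, y, hy, rfl⟩ := hXY a
  exact ⟨x, hx, lam (cinv x) y, hY _ y hy, add_eq_circ_lam_cinv x y⟩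

end SkewBrace

theorem exists_eq_add_swap {G : Type*} [AddGroup G] {H K : AddSubgroup G}
    (hHK : ∀ g : G, ∃ h ∈ H, ∃ k ∈ K, g = h + k) (g : G) : ∃ k ∈ K, ∃ h ∈ H, g = k + h := by
  obtain ⟨h, hh, k, hk, hg⟩ := hHK (-g)
  exact ⟨-k, neg_mem hk, -h, neg_mem hh, by rw [← neg_add_rev, ← hg, neg_neg]⟩

theorem coe_sup_eq_setOf_eq_add {G : Type*} [AddGroup G] (H K : AddSubgroup G) [H.Normal] :
    ((H ⊔ K : AddSubgroup G) : Set G) = {g : G | ∃ h ∈ H, ∃ k ∈ K, g = h + k} := by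
  ext g
  simp only [SetLike.mem_coe, AddSubgroup.mem_sup_of_normal_left, Set.mem_ofPred_eq, eq_comm]

theorem stmt8_general {A : Type*} [SkewBrace A] (B C : AddSubgroup A)
    (hC : ∀ a : A, ∀ x ∈ C, lam a x ∈ C)
    (hBtriv : ∀ x ∈ B, ∀ y ∈ B, x + y = circ x y)
    (hCtriv : ∀ x ∈ C, ∀ y ∈ C, x + y = circ x y)
    (hfact : ∀ a : A, ∃ b ∈ B, ∃ c ∈ C, a = b + c) :
    ((starSpan (Set.univ : Set A) (Set.univ : Set A) : AddSubgroup A) : Set A) =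
      {t : A | ∃ u ∈ starSpan (B : Set A) (C : Set A),
               ∃ v ∈ starSpan (C : Set A) (B : Set A), t = u + v} ∧
    ((starSpan (Set.univ : Set A) (Set.univ : Set A) : AddSubgroup A) : Set A) =
      {t : A | ∃ v ∈ starSpan (C : Set A) (B : Set A),
               ∃ u ∈ starSpan (B : Set A) (C : Set A), t = v + u} := by
  have hsup := starSpan_univ_univ_eq_sup (exists_eq_circ_of_exists_eq_add hC hfact)
  have hBC : starSpan (B : Set A) Set.univ = starSpan B C :=
    starSpan_univ_right_eq_of_bstar_eq_zero
      (fun x hx y hy => bstar_eq_zero_iff.2 (hBtriv x hx y hy)) (exists_eq_add_swap hfact)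
  have hCB : starSpan (C : Set A) Set.univ = starSpan C B :=
    starSpan_univ_right_eq_of_bstar_eq_zero
      (fun x hx y hy => bstar_eq_zero_iff.2 (hCtriv x hx y hy)) hfact
  rw [← hBC, ← hCB, hsup]
  refine ⟨coe_sup_eq_setOf_eq_add _ _, ?_⟩
  rw [sup_comm, coe_sup_eq_setOf_eq_add]

/-- if `A = B + C` is a factorization through left ideals which are trivial
as skew braces, then `A^(2) = A*A` equals `B*C + C*B` and `C*B + B*C`. -/
theorem stmt8 {A : Type*} [SkewBrace A] (B C : AddSubgroup A)
    (hB : ∀ a : A, ∀ x ∈ B, lam a x ∈ B)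
    (hC : ∀ a : A, ∀ x ∈ C, lam a x ∈ C)
    (hBtriv : ∀ x ∈ B, ∀ y ∈ B, x + y = circ x y)
    (hCtriv : ∀ x ∈ C, ∀ y ∈ C, x + y = circ x y)
    (hfact : ∀ a : A, ∃ b ∈ B, ∃ c ∈ C, a = b + c) :
    ((starSpan (Set.univ : Set A) (Set.univ : Set A) : AddSubgroup A) : Set A) =
      {t : A | ∃ u ∈ starSpan (B : Set A) (C : Set A),
               ∃ v ∈ starSpan (C : Set A) (B : Set A), t = u + v} ∧
    ((starSpan (Set.univ : Set A) (Set.univ : Set A) : AddSubgroup A) : Set A) =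
      {t : A | ∃ v ∈ starSpan (C : Set A) (B : Set A),
               ∃ u ∈ starSpan (B : Set A) (C : Set A), t = v + u} :=
  stmt8_general B C hC hBtriv hCtriv hfact
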